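/- Let V, V' be finite-dimensional complex vector spaces, and h, h' singular Hermitian forms on V and V' respectively such that the tensor product h ⊗ h' is defined (that is: either both h, h' are non-degenerate or both are finite, or one of them is both non-degenerate and finite). Then under the canonical identification (V ⊗ V')^∨ ≅ V^∨ ⊗ V'^∨ one has (h ⊗ h')^∨ = h^∨ ⊗ h'^∨. -/

import Mathlib

/-!
Every singular Hermitian form `h` on a finite-dimensional space is diagonal: there are a basis
and weights `c i ∈ [0, ∞]` with `h x = ∑ c i * |x i|²` (`IsSingularHermitianForm.isDiagonalizable`).
The weights are `0` on the kernel, `1` on an orthonormal basis of a complement of the kernel in the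
finiteness locus, and `∞` on a complement of the finiteness locus. That the parallelogram law and
homogeneity yield a sesquilinear polarization is the Jordan-von Neumann theorem, proved here for
semi-definite forms.

In diagonal coordinates the claim is elementary. The dual form is diagonal in the dual basis with
weights `(c i)⁻¹` (`hermDual_diagForm_eq`, by Cauchy-Schwarz), and the tensor product is diagonal in
the product basis with weights `c i * c' j` as long as no product `0 * ∞` occurs
(`isTensorOf_diagForm`), which is what the hypothesis on `h` and `h'` ensures. A tensor product of
forms is unique (`IsTensorOf.unique`), so `H` is this diagonal form, and the theorem reduces to
`(c i * c' j)⁻¹ = (c i)⁻¹ * (c' j)⁻¹`.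
-/

open scoped ENNReal TensorProduct

/-- A singular Hermitian form on a complex vector space `V` (see the paper):
the finiteness locus is a subspace and the restriction there is a semi-positive
Hermitian form; captured by the parallelogram law and `|c|²`-homogeneity. -/
structure IsSingularHermitianForm {V : Type*} [AddCommGroup V] [Module ℂ V]
    (h : V → ℝ≥0∞) : Prop where
  parallelogram : ∀ x y : V, h x ≠ ⊤ → h y ≠ ⊤ →
    h (x + y) + h (x - y) = 2 * h x + 2 * h y
  smul_eq : ∀ (c : ℂ) (x : V), h (c • x) = (‖c‖₊ : ℝ≥0∞) ^ 2 * h x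

/-- `h` is finite if it never takes the value `∞`. -/
def IsFiniteForm {V : Type*} [AddCommGroup V] [Module ℂ V]
    (h : V → ℝ≥0∞) : Prop := ∀ x : V, h x ≠ ⊤

/-- `h` is non-degenerate if its restriction to the finiteness locus is positive
definite, i.e. `h x = 0` only for `x = 0`. -/
def IsNondegenerateForm {V : Type*} [AddCommGroup V] [Module ℂ V]
    (h : V → ℝ≥0∞) : Prop := ∀ x : V, h x = 0 → x = 0

/-- The sesquilinear form associated with `h` on its finiteness locus, recovered
by complex polarization. -/
noncomputable def hermPolar {V : Type*} [AddCommGroup V] [Module ℂ V]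
    (h : V → ℝ≥0∞) (x y : V) : ℂ :=
  (4 : ℂ)⁻¹ * ∑ k ∈ Finset.range 4,
    Complex.I ^ k * ((h (x + Complex.I ^ k • y)).toReal : ℂ)

/-- The dual singular Hermitian form on `V^∨`:
`h^∨(ℓ) = ⨆ x, |ℓ x|² / h x` in `ℝ≥0∞`. -/
noncomputable def hermDual {V : Type*} [AddCommGroup V] [Module ℂ V]
    (h : V → ℝ≥0∞) : Module.Dual ℂ V → ℝ≥0∞ :=
  fun ℓ => ⨆ x : V, ((‖ℓ x‖₊ : ℝ≥0∞) ^ 2) / h x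

/-- `H` is the tensor product `h ⊗ h'` of singular Hermitian forms: its
finiteness locus is (the image of) `V_fin ⊗ V'_fin`, and on pure tensors from
the finiteness loci its sesquilinear form is the product of those of `h`, `h'`. -/
def IsTensorOf {V V' : Type*} [AddCommGroup V] [Module ℂ V]
    [AddCommGroup V'] [Module ℂ V'] (h : V → ℝ≥0∞) (h' : V' → ℝ≥0∞)
    (H : V ⊗[ℂ] V' → ℝ≥0∞) : Prop :=
  IsSingularHermitianForm H ∧
  {t : V ⊗[ℂ] V' | H t ≠ ⊤}
    = (Submodule.span ℂ
        {t : V ⊗[ℂ] V' | ∃ x y, h x ≠ ⊤ ∧ h' y ≠ ⊤ ∧ t = x ⊗ₜ[ℂ] y} : Set _) ∧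
  ∀ x y : V, ∀ x' y' : V', h x ≠ ⊤ → h y ≠ ⊤ → h' x' ≠ ⊤ → h' y' ≠ ⊤ →
    hermPolar H (x ⊗ₜ[ℂ] x') (y ⊗ₜ[ℂ] y') = hermPolar h x y * hermPolar h' x' y'

/-! ### Polarization and the Jordan-von Neumann argument -/

section JordanVonNeumann

variable {V : Type*} [AddCommGroup V] [Module ℂ V]

theorem IsSingularHermitianForm.comp_linearMap {W : Type*} [AddCommGroup W] [Module ℂ W]
    {h : V → ℝ≥0∞} (hh : IsSingularHermitianForm h) (f : W →ₗ[ℂ] V) :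
    IsSingularHermitianForm (fun w => h (f w)) where
  parallelogram x y hx hy := by simpa using hh.parallelogram (f x) (f y) hx hy
  smul_eq c x := by simpa using hh.smul_eq c (f x)

theorem IsSingularHermitianForm.map_zero {h : V → ℝ≥0∞} (hh : IsSingularHermitianForm h) :
    h 0 = 0 := by
  simpa using hh.smul_eq 0 0

theorem IsSingularHermitianForm.add_ne_top {h : V → ℝ≥0∞} (hh : IsSingularHermitianForm h)
    {x y : V} (hx : h x ≠ ⊤) (hy : h y ≠ ⊤) : h (x + y) ≠ ⊤ := by
  refine ne_top_of_le_ne_top ?_ ((le_self_add).trans_eq (hh.parallelogram x y hx hy))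
  finiteness

theorem IsSingularHermitianForm.smul_ne_top {h : V → ℝ≥0∞} (hh : IsSingularHermitianForm h)
    (c : ℂ) {x : V} (hx : h x ≠ ⊤) : h (c • x) ≠ ⊤ := by
  rw [hh.smul_eq]
  finiteness

/-- The finiteness locus of a singular Hermitian form. -/
def IsSingularHermitianForm.finLocus {h : V → ℝ≥0∞} (hh : IsSingularHermitianForm h) :
    Submodule ℂ V where
  carrier := {x | h x ≠ ⊤}
  add_mem' hx hy := hh.add_ne_top hx hy
  zero_mem' := by simp [hh.map_zero]
  smul_mem' c _ hx := hh.smul_ne_top c hx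

/-- The kernel `h⁻¹(0)` of a singular Hermitian form; it is a subspace because the parallelogram
law forces `h (x + y) = 0` as soon as `h x = h y = 0`. -/
def IsSingularHermitianForm.kernel {h : V → ℝ≥0∞} (hh : IsSingularHermitianForm h) :
    Submodule ℂ V where
  carrier := {x | h x = 0}
  add_mem' {x y} hx hy := by
    have hx' : h x = 0 := hx
    have hy' : h y = 0 := hy
    have := hh.parallelogram x y (by simp [hx']) (by simp [hy'])
    rw [hx', hy'] at this
    simp only [mul_zero, add_zero, add_eq_zero] at this
    exact this.1
  zero_mem' := hh.map_zero
  smul_mem' c x hx := by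
    have hx' : h x = 0 := hx
    simp [hh.smul_eq, hx']

/-- `polarRe Q x y = Q (x + y) - Q (x - y)`, four times the real part of the polarization. -/
def polarRe (Q : V → ℝ) (x y : V) : ℝ := Q (x + y) - Q (x - y)

/-- A real-valued function obeying the hypotheses of a finite singular Hermitian form. -/
structure IsParallelogramForm (Q : V → ℝ) : Prop where
  nonneg : ∀ x, 0 ≤ Q x
  par : ∀ x y, Q (x + y) + Q (x - y) = 2 * Q x + 2 * Q y
  smul : ∀ (c : ℂ) x, Q (c • x) = ‖c‖ ^ 2 * Q x

namespace IsParallelogramForm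

variable {Q : V → ℝ} (hQ : IsParallelogramForm Q)
include hQ

theorem neg (x : V) : Q (-x) = Q x := by simpa using hQ.smul (-1) x

theorem sub_comm (x y : V) : Q (x - y) = Q (y - x) := by rw [← hQ.neg, neg_sub]

theorem add_three (x y z : V) :
    Q (x + y + z) = Q (x + y) + Q (y + z) + Q (x + z) - Q x - Q y - Q z := by
  have h1 := hQ.par (x + y) z
  have h2 := hQ.par (x - z) y
  have h3 := hQ.par x (y + z)
  have h4 := hQ.par x z
  rw [show x - z + y = x + y - z by abel, show x - z - y = x - (y + z) by abel] at h2
  rw [← add_assoc] at h3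
  linarith

theorem polarRe_add_left (x x' y : V) :
    polarRe Q (x + x') y = polarRe Q x y + polarRe Q x' y := by
  have h1 := hQ.add_three x x' y
  have h2 := hQ.add_three x x' (-y)
  have h3 := hQ.neg y
  simp only [← sub_eq_add_neg] at h2
  unfold polarRe
  linarith

theorem polarRe_symm (x y : V) : polarRe Q x y = polarRe Q y x := by
  simp only [polarRe, add_comm x y, hQ.sub_comm x y]

theorem abs_polarRe_le (x y : V) : |polarRe Q x y| ≤ 2 * Q x + 2 * Q y := by
  have := hQ.par x y
  have h1 := hQ.nonneg (x + y)
  have h2 := hQ.nonneg (x - y)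
  rw [polarRe, abs_le]
  constructor <;> linarith

/-- `t ↦ polarRe Q (t • x) y - t * polarRe Q x y` is additive, vanishes at integers and is bounded
on `[0, 1]`, hence bounded on `ℝ`, hence zero. -/
theorem polarRe_smul_left (t : ℝ) (x y : V) :
    polarRe Q ((t : ℂ) • x) y = t * polarRe Q x y := by
  let k : ℝ →+ ℝ :=
    { toFun := fun s => polarRe Q ((s : ℂ) • x) y - s * polarRe Q x y
      map_zero' := by simp [polarRe, hQ.neg]
      map_add' := fun s r => by
        push_cast
        rw [add_smul, hQ.polarRe_add_left]
        ring }
  have hk : ∀ s, k s = polarRe Q ((s : ℂ) • x) y - s * polarRe Q x y := fun s => rfl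
  have hk1 : k 1 = 0 := by simp [hk]
  have hint (n : ℤ) : k n = 0 := by
    have := map_zsmul k n 1
    simpa [hk1] using this
  set C := (2 * Q x + 2 * Q y) + (2 * Q x + 2 * Q y) with hC
  have hbound1 (s : ℝ) (h0 : 0 ≤ s) (h1 : s ≤ 1) : |k s| ≤ C := by
    rw [hk]
    refine (abs_sub _ _).trans (add_le_add ?_ ?_)
    · refine (hQ.abs_polarRe_le _ _).trans ?_
      rw [hQ.smul]
      have : ‖(s : ℂ)‖ ^ 2 ≤ 1 := by
        rw [Complex.norm_real, Real.norm_eq_abs, sq_abs]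
        nlinarith
      have := mul_le_mul_of_nonneg_right this (hQ.nonneg x)
      linarith
    · rw [abs_mul, abs_of_nonneg h0]
      exact (mul_le_of_le_one_left (abs_nonneg _) h1).trans (hQ.abs_polarRe_le _ _)
  have hbound (s : ℝ) : |k s| ≤ C := by
    have := map_add k (⌊s⌋ : ℝ) (Int.fract s)
    rw [Int.floor_add_fract, hint, zero_add] at this
    rw [this]
    exact hbound1 _ (Int.fract_nonneg s) (Int.fract_lt_one s).le
  have hzero : k t = 0 := by
    by_contra hne
    obtain ⟨n, hn⟩ := Archimedean.arch (C + 1) (abs_pos.mpr hne)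
    have h1 := hbound (n • t)
    rw [map_nsmul, abs_nsmul] at h1
    linarith
  rw [hk] at hzero
  linarith

theorem polarRe_I_left (x y : V) :
    polarRe Q (Complex.I • x) y = - polarRe Q x (Complex.I • y) := by
  have h1 := hQ.smul Complex.I (x - Complex.I • y)
  have h2 := hQ.smul Complex.I (x + Complex.I • y)
  simp only [smul_sub, smul_add, smul_smul, Complex.I_mul_I, neg_smul, one_smul, Complex.norm_I,
    one_pow, one_mul, sub_neg_eq_add, ← sub_eq_add_neg] at h1 h2
  unfold polarRe
  linarith

theorem polarRe_self (x : V) : polarRe Q x x = 4 * Q x := by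
  have := hQ.smul 2 x
  rw [two_smul] at this
  have h0 := hQ.smul 0 x
  norm_num at this h0
  simp [polarRe, this, h0]

theorem polarRe_self_I (x : V) : polarRe Q x (Complex.I • x) = 0 := by
  have h1 := hQ.polarRe_I_left x x
  have h2 := hQ.polarRe_symm (Complex.I • x) x
  linarith

/-- `t * polarRe Q a x` is bounded in `t` when `Q a = 0`, so `polarRe Q a x = 0`. -/
theorem add_of_eq_zero {a : V} (ha : Q a = 0) (x : V) : Q (a + x) = Q x := by
  have hD : polarRe Q a x = 0 := by
    by_contra hne
    have h1 := hQ.abs_polarRe_le ((((2 * Q x + 1) / polarRe Q a x : ℝ) : ℂ) • a) x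
    rw [hQ.polarRe_smul_left, hQ.smul, ha, div_mul_cancel₀ _ hne] at h1
    have h2 := le_abs_self (2 * Q x + 1)
    linarith
  have hp := hQ.par a x
  unfold polarRe at hD
  linarith

end IsParallelogramForm

theorem IsSingularHermitianForm.isParallelogramForm {h : V → ℝ≥0∞}
    (hh : IsSingularHermitianForm h) (hf : IsFiniteForm h) :
    IsParallelogramForm (fun x => (h x).toReal) where
  nonneg x := ENNReal.toReal_nonneg
  par x y := by
    have := congrArg ENNReal.toReal (hh.parallelogram x y (hf x) (hf y))
    rw [ENNReal.toReal_add (hf _) (hf _), ENNReal.toReal_add (by finiteness [hf x])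
      (by finiteness [hf y])] at this
    simpa using this
  smul c x := by simp [hh.smul_eq]

theorem hermPolar_eq (h : V → ℝ≥0∞) (x y : V) :
    hermPolar h x y = 4⁻¹ * ((polarRe (fun x => (h x).toReal) x y : ℝ) +
      Complex.I * (polarRe (fun x => (h x).toReal) x (Complex.I • y) : ℝ)) := by
  have h3 : Complex.I ^ 3 = -Complex.I := by
    rw [pow_succ, Complex.I_sq]; ring
  simp only [hermPolar, Finset.sum_range_succ, Finset.sum_range_zero, polarRe, pow_zero, pow_one,
    Complex.I_sq, h3, one_smul, neg_smul, ← sub_eq_add_neg]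
  push_cast
  ring

namespace IsSingularHermitianForm

theorem hermPolar_add_left_of_finite {h : V → ℝ≥0∞} (hh : IsSingularHermitianForm h)
    (hf : IsFiniteForm h) (x x' y : V) :
    hermPolar h (x + x') y = hermPolar h x y + hermPolar h x' y := by
  have hQ := hh.isParallelogramForm hf
  simp only [hermPolar_eq, hQ.polarRe_add_left]
  push_cast
  ring

theorem hermPolar_smul_left_of_finite {h : V → ℝ≥0∞} (hh : IsSingularHermitianForm h)
    (hf : IsFiniteForm h) (c : ℂ) (x y : V) :
    hermPolar h (c • x) y = c * hermPolar h x y := by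
  have hQ := hh.isParallelogramForm hf
  have hc : c • x = (c.re : ℂ) • x + (c.im : ℂ) • (Complex.I • x) := by
    rw [smul_smul, ← add_smul, Complex.re_add_im]
  have hII : Complex.I • Complex.I • y = (-1 : ℂ) • y := by
    rw [smul_smul, Complex.I_mul_I]
  have hneg : polarRe (fun x => (h x).toReal) x ((-1 : ℂ) • y)
      = - polarRe (fun x => (h x).toReal) x y := by
    simp [polarRe, sub_eq_add_neg]
  rw [hc]
  simp only [hermPolar_eq, hQ.polarRe_add_left, hQ.polarRe_smul_left, hQ.polarRe_I_left, hII, hneg]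
  conv_rhs => rw [← Complex.re_add_im c]
  push_cast
  linear_combination (-(c.im : ℂ) * 4⁻¹ *
    (polarRe (fun x => (h x).toReal) x (Complex.I • y) : ℝ)) * Complex.I_mul_I

theorem conj_hermPolar_of_finite {h : V → ℝ≥0∞} (hh : IsSingularHermitianForm h)
    (hf : IsFiniteForm h) (x y : V) :
    (starRingEnd ℂ) (hermPolar h x y) = hermPolar h y x := by
  have hQ := hh.isParallelogramForm hf
  have h1 := hQ.polarRe_I_left x y
  rw [hQ.polarRe_symm] at h1
  simp only [hermPolar_eq, hQ.polarRe_symm y x, h1]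
  have h4 : (starRingEnd ℂ) 4 = 4 := map_ofNat _ 4
  simp [h4]

theorem hermPolar_self_of_finite {h : V → ℝ≥0∞} (hh : IsSingularHermitianForm h)
    (hf : IsFiniteForm h) (x : V) :
    hermPolar h x x = ((h x).toReal : ℂ) := by
  have hQ := hh.isParallelogramForm hf
  rw [hermPolar_eq, hQ.polarRe_self, hQ.polarRe_self_I]
  push_cast
  ring

variable {h : V → ℝ≥0∞} (hh : IsSingularHermitianForm h)
include hh

theorem finite_restrict : IsFiniteForm (fun w : hh.finLocus => h w) := fun w => w.2

theorem hermPolar_add_left {x x' y : V} (hx : h x ≠ ⊤) (hx' : h x' ≠ ⊤) (hy : h y ≠ ⊤) :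
    hermPolar h (x + x') y = hermPolar h x y + hermPolar h x' y :=
  (hh.comp_linearMap hh.finLocus.subtype).hermPolar_add_left_of_finite hh.finite_restrict
    ⟨x, hx⟩ ⟨x', hx'⟩ ⟨y, hy⟩

theorem hermPolar_smul_left (c : ℂ) {x y : V} (hx : h x ≠ ⊤) (hy : h y ≠ ⊤) :
    hermPolar h (c • x) y = c * hermPolar h x y :=
  (hh.comp_linearMap hh.finLocus.subtype).hermPolar_smul_left_of_finite hh.finite_restrict
    c ⟨x, hx⟩ ⟨y, hy⟩

theorem conj_hermPolar {x y : V} (hx : h x ≠ ⊤) (hy : h y ≠ ⊤) :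
    (starRingEnd ℂ) (hermPolar h x y) = hermPolar h y x :=
  (hh.comp_linearMap hh.finLocus.subtype).conj_hermPolar_of_finite hh.finite_restrict
    ⟨x, hx⟩ ⟨y, hy⟩

theorem hermPolar_self {x : V} (hx : h x ≠ ⊤) : hermPolar h x x = ((h x).toReal : ℂ) :=
  (hh.comp_linearMap hh.finLocus.subtype).hermPolar_self_of_finite hh.finite_restrict ⟨x, hx⟩

end IsSingularHermitianForm

end JordanVonNeumann
/-! ### Diagonal forms and their duals -/

section Diagonal

variable {V : Type*} [AddCommGroup V] [Module ℂ V] {ι : Type*} [Fintype ι]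

/-- The diagonal singular Hermitian form `∑ c i * |x i|²` in a basis, with weights
`c i ∈ [0, ∞]`. By the convention `∞ * 0 = 0`, a weight `∞` forces the coordinate to vanish
on the finiteness locus. -/
noncomputable def diagForm (b : Module.Basis ι ℂ V) (c : ι → ℝ≥0∞) (x : V) : ℝ≥0∞ :=
  ∑ i, c i * (‖b.repr x i‖₊ : ℝ≥0∞) ^ 2

variable (b : Module.Basis ι ℂ V) (c : ι → ℝ≥0∞)

theorem diagForm_basis (i : ι) : diagForm b c (b i) = c i := by
  classical
  rw [diagForm, Finset.sum_eq_single i]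
  · simp
  · intro j _ hj
    simp [hj.symm]
  · simp

theorem nnnorm_sq_parallelogram (a a' : ℂ) :
    (‖a + a'‖₊ : ℝ≥0∞) ^ 2 + (‖a - a'‖₊ : ℝ≥0∞) ^ 2
      = 2 * (‖a‖₊ : ℝ≥0∞) ^ 2 + 2 * (‖a'‖₊ : ℝ≥0∞) ^ 2 := by
  have := parallelogram_law_with_norm ℂ a a'
  norm_cast
  ext
  push_cast
  linarith

theorem isSingularHermitianForm_diagForm : IsSingularHermitianForm (diagForm b c) where
  parallelogram x y _ _ := by
    simp only [diagForm, Finset.mul_sum, ← Finset.sum_add_distrib]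
    refine Finset.sum_congr rfl fun i _ => ?_
    rw [map_add, map_sub, Finsupp.add_apply, Finsupp.sub_apply, ← mul_add,
      nnnorm_sq_parallelogram]
    ring
  smul_eq a x := by
    simp only [diagForm, Finset.mul_sum]
    refine Finset.sum_congr rfl fun i _ => ?_
    simp only [map_smul, Finsupp.smul_apply, smul_eq_mul, nnnorm_mul, ENNReal.coe_mul]
    ring

variable {b c}

theorem repr_eq_zero_of_diagForm_ne_top {x : V} (hx : diagForm b c x ≠ ⊤) {i : ι}
    (hi : c i = ⊤) : b.repr x i = 0 := by
  by_contra hne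
  refine (ENNReal.sum_ne_top.mp hx) i (Finset.mem_univ i) ?_
  rw [hi, ENNReal.top_mul]
  simpa using hne

theorem toReal_diagForm {x : V} (hx : diagForm b c x ≠ ⊤) :
    (diagForm b c x).toReal = ∑ i, (c i).toReal * ‖b.repr x i‖ ^ 2 := by
  rw [diagForm, ENNReal.toReal_sum (ENNReal.sum_ne_top.mp hx)]
  simp

theorem polarization_complex (a a' : ℂ) :
    (4 : ℂ)⁻¹ * ∑ k ∈ Finset.range 4,
      Complex.I ^ k * ((‖a + Complex.I ^ k * a'‖ ^ 2 : ℝ) : ℂ) = a * (starRingEnd ℂ) a' := by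
  have h3 : Complex.I ^ 3 = -Complex.I := by
    rw [pow_succ, Complex.I_sq]; ring
  have hI := Complex.I_sq
  simp only [Finset.sum_range_succ, Finset.sum_range_zero, Complex.ofReal_pow, ← Complex.mul_conj']
  simp only [pow_zero, pow_one, Complex.I_sq, h3, map_add, map_mul, map_neg, Complex.conj_I,
    map_one]
  linear_combination (2⁻¹ * a' * (starRingEnd ℂ) a - 2⁻¹ * a * (starRingEnd ℂ) a') * hI

theorem hermPolar_diagForm {x y : V} (hx : diagForm b c x ≠ ⊤) (hy : diagForm b c y ≠ ⊤) :
    hermPolar (diagForm b c) x y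
      = ∑ i, ((c i).toReal : ℂ) * (b.repr x i * (starRingEnd ℂ) (b.repr y i)) := by
  have hfin (a : ℂ) : diagForm b c (x + a • y) ≠ ⊤ :=
    (isSingularHermitianForm_diagForm b c).add_ne_top hx
      ((isSingularHermitianForm_diagForm b c).smul_ne_top a hy)
  simp only [hermPolar, toReal_diagForm (hfin _), ← polarization_complex, Finset.mul_sum,
    Complex.ofReal_sum]
  rw [Finset.sum_comm]
  refine Finset.sum_congr rfl fun i _ => Finset.sum_congr rfl fun k _ => ?_
  simp only [map_add, map_smul, Finsupp.add_apply, Finsupp.smul_apply, smul_eq_mul]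
  push_cast
  ring

/-- Passing to the dual inverts the weights and replaces the basis by the dual one; the
inverse exchanges the weights `0` and `∞`. -/
theorem hermDual_diagForm (ℓ : Module.Dual ℂ V) :
    hermDual (diagForm b c) ℓ = ∑ i, (c i)⁻¹ * (‖ℓ (b i)‖₊ : ℝ≥0∞) ^ 2 := by
  have hexp (x : V) : ℓ x = ∑ i, b.repr x i * ℓ (b i) :=
    (congrArg ℓ (b.sum_repr x).symm).trans (by simp only [map_sum, map_smul, smul_eq_mul])
  set R := ∑ i, (c i)⁻¹ * (‖ℓ (b i)‖₊ : ℝ≥0∞) ^ 2 with hR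
  refine le_antisymm (iSup_le fun x => ?_) ?_
  · by_cases hx : diagForm b c x = ⊤
    · simp [hx]
    by_cases hRt : R = ⊤
    · simp [hRt]
    have hRi := ENNReal.sum_ne_top.mp hRt
    have hl (i : ι) (hi : c i = 0) : ℓ (b i) = 0 := by
      by_contra hne
      refine hRi i (Finset.mem_univ i) ?_
      rw [hi, ENNReal.inv_zero, ENNReal.top_mul]
      simpa using hne
    -- Cauchy-Schwarz; terms of weight `0` or `∞` drop out on both sides.
    have hcs : ‖ℓ x‖ ^ 2 ≤ R.toReal * (diagForm b c x).toReal := by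
      rw [toReal_diagForm hx, hR, ENNReal.toReal_sum hRi, hexp]
      refine (pow_le_pow_left₀ (norm_nonneg _) (norm_sum_le _ _) 2).trans ?_
      refine Finset.sum_sq_le_sum_mul_sum_of_sq_le_mul _ (fun i _ => ENNReal.toReal_nonneg)
        (fun i _ => by positivity) fun i _ => ?_
      by_cases h0 : c i = 0
      · simp [h0, hl i h0]
      by_cases ht : c i = ⊤
      · simp [ht, repr_eq_zero_of_diagForm_ne_top hx ht]
      have : (c i).toReal ≠ 0 := ENNReal.toReal_ne_zero.mpr ⟨h0, ht⟩
      refine le_of_eq ?_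
      simp only [norm_mul, ENNReal.toReal_mul, ENNReal.toReal_inv, ENNReal.toReal_pow,
        ENNReal.coe_toReal, coe_nnnorm]
      field_simp
    refine ENNReal.div_le_of_le_mul ?_
    rw [← ENNReal.toReal_le_toReal (by finiteness) (by finiteness)]
    simpa using hcs
  · by_cases hRt : R = ⊤
    · obtain ⟨i, -, hi⟩ := ENNReal.sum_eq_top.mp hRt
      refine le_iSup_of_le (b i) ?_
      rw [diagForm_basis, div_eq_mul_inv, mul_comm, hi, hRt]
    -- The supremum is attained at the Riesz representative of `ℓ`.
    have hRi := ENNReal.sum_ne_top.mp hRt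
    set x : V := ∑ i, (((c i)⁻¹.toReal : ℂ) * (starRingEnd ℂ) (ℓ (b i))) • b i with hxdef
    have hrepr (i : ι) :
        b.repr x i = ((c i)⁻¹.toReal : ℂ) * (starRingEnd ℂ) (ℓ (b i)) := by
      rw [hxdef, b.repr_sum_self]
    have hℓx : ℓ x = (R.toReal : ℂ) := by
      rw [hexp, hR, ENNReal.toReal_sum hRi, Complex.ofReal_sum]
      refine Finset.sum_congr rfl fun i _ => ?_
      rw [hrepr, mul_assoc, Complex.conj_mul']
      simp
    have hhx : diagForm b c x = R := by
      refine Finset.sum_congr rfl fun i _ => ?_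
      rw [hrepr]
      by_cases h0 : c i = 0
      · have : ℓ (b i) = 0 := by
          by_contra hne
          refine hRi i (Finset.mem_univ i) ?_
          rw [h0, ENNReal.inv_zero, ENNReal.top_mul]
          simpa using hne
        simp [h0, this]
      by_cases ht : c i = ⊤
      · simp [ht]
      have hnn : (‖((c i)⁻¹.toReal : ℂ) * (starRingEnd ℂ) (ℓ (b i))‖₊ : ℝ≥0∞)
          = (c i)⁻¹ * (‖ℓ (b i)‖₊ : ℝ≥0∞) := by
        rw [nnnorm_mul, ENNReal.coe_mul]
        congr 1
        · rw [← ENNReal.toReal_eq_toReal_iff' (by finiteness) (by finiteness)]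
          simp
        · simp
      rw [hnn, mul_pow, sq (c i)⁻¹, ← mul_assoc, ← mul_assoc, ENNReal.mul_inv_cancel h0 ht, one_mul]
    refine le_iSup_of_le x ?_
    rw [hhx, hℓx]
    have : (‖((R.toReal : ℝ) : ℂ)‖₊ : ℝ≥0∞) = R := by
      rw [← ENNReal.toReal_eq_toReal_iff' (by finiteness) hRt]
      simp
    rw [this]
    by_cases hR0 : R = 0
    · simp [hR0]
    · rw [sq, ENNReal.mul_div_cancel_right hR0 hRt]

theorem hermDual_diagForm_eq [DecidableEq ι] :
    hermDual (diagForm b c) = diagForm b.dualBasis (fun i => (c i)⁻¹) := by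
  ext ℓ
  simp [hermDual_diagForm, diagForm]

end Diagonal

/-! ### Tensor products of diagonal forms, and uniqueness -/

section Tensor

variable {V V' : Type*} [AddCommGroup V] [Module ℂ V] [AddCommGroup V'] [Module ℂ V']

theorem diagForm_tmul {ι κ : Type*} [Fintype ι] [Fintype κ] (b : Module.Basis ι ℂ V)
    (b' : Module.Basis κ ℂ V') (c : ι → ℝ≥0∞) (c' : κ → ℝ≥0∞) (x : V) (x' : V') :
    diagForm (b.tensorProduct b') (fun p => c p.1 * c' p.2) (x ⊗ₜ[ℂ] x')
      = diagForm b c x * diagForm b' c' x' := by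
  simp only [diagForm, Fintype.sum_mul_sum, Fintype.sum_prod_type]
  refine Finset.sum_congr rfl fun i _ => Finset.sum_congr rfl fun j _ => ?_
  rw [Module.Basis.tensorProduct_repr_tmul_apply, smul_eq_mul, nnnorm_mul, ENNReal.coe_mul]
  ring

/-- The hypotheses exclude exactly the products `0 * ∞`, for which the convention `0 * ∞ = 0`
would give the wrong finiteness locus. -/
theorem isTensorOf_diagForm {ι κ : Type*} [Fintype ι] [Fintype κ] (b : Module.Basis ι ℂ V)
    (b' : Module.Basis κ ℂ V') (c : ι → ℝ≥0∞) (c' : κ → ℝ≥0∞)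
    (h1 : ∀ i j, c i = 0 → c' j ≠ ⊤) (h2 : ∀ i j, c i = ⊤ → c' j ≠ 0) :
    IsTensorOf (diagForm b c) (diagForm b' c')
      (diagForm (b.tensorProduct b') (fun p => c p.1 * c' p.2)) := by
  set H := diagForm (b.tensorProduct b') (fun p => c p.1 * c' p.2) with hHdef
  have hH : IsSingularHermitianForm H := isSingularHermitianForm_diagForm _ _
  have htm (x : V) (x' : V') (hx : diagForm b c x ≠ ⊤) (hx' : diagForm b' c' x' ≠ ⊤) :
      H (x ⊗ₜ[ℂ] x') ≠ ⊤ := by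
    rw [hHdef, diagForm_tmul]
    exact ENNReal.mul_ne_top hx hx'
  refine ⟨hH, Set.Subset.antisymm ?_ ?_, ?_⟩
  · intro t ht
    rw [← (b.tensorProduct b').sum_repr t]
    refine Submodule.sum_mem _ fun p _ => ?_
    by_cases hp : c p.1 * c' p.2 = ⊤
    · rw [repr_eq_zero_of_diagForm_ne_top ht hp, zero_smul]
      exact Submodule.zero_mem _
    · refine Submodule.smul_mem _ _ (Submodule.subset_span ⟨b p.1, b' p.2, ?_, ?_, ?_⟩)
      · rw [diagForm_basis]
        intro htop
        exact hp (by rw [htop, ENNReal.top_mul (h2 _ _ htop)])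
      · rw [diagForm_basis]
        intro htop
        exact hp (by rw [htop, ENNReal.mul_top (fun h0 => h1 _ _ h0 htop)])
      · rw [Module.Basis.tensorProduct_apply']
  · change _ ≤ hH.finLocus
    refine Submodule.span_le.mpr ?_
    rintro t ⟨x, x', hx, hx', rfl⟩
    exact htm x x' hx hx'
  · intro x y x' y' hx hy hx' hy'
    rw [hHdef, hermPolar_diagForm (htm x x' hx hx') (htm y y' hy hy'), hermPolar_diagForm hx hy,
      hermPolar_diagForm hx' hy', Fintype.sum_mul_sum, Fintype.sum_prod_type]
    refine Finset.sum_congr rfl fun i _ => Finset.sum_congr rfl fun j _ => ?_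
    simp only [Module.Basis.tensorProduct_repr_tmul_apply, smul_eq_mul, map_mul,
      ENNReal.toReal_mul, Complex.ofReal_mul]
    ring

theorem IsTensorOf.unique {h : V → ℝ≥0∞} {h' : V' → ℝ≥0∞} {H H' : V ⊗[ℂ] V' → ℝ≥0∞}
    (hH : IsTensorOf h h' H) (hH' : IsTensorOf h h' H') : H = H' := by
  obtain ⟨hs, hfin, hpol⟩ := hH
  obtain ⟨hs', hfin', hpol'⟩ := hH'
  set G := {t : V ⊗[ℂ] V' | ∃ x y, h x ≠ ⊤ ∧ h' y ≠ ⊤ ∧ t = x ⊗ₜ[ℂ] y}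
  have hm' (t) : t ∈ Submodule.span ℂ G ↔ H' t ≠ ⊤ := (Set.ext_iff.mp hfin' t).symm
  have hm (t) : t ∈ Submodule.span ℂ G ↔ H t ≠ ⊤ := (Set.ext_iff.mp hfin t).symm
  -- Two sesquilinear forms that agree on generators of the common finiteness locus.
  have hleft (s t) (hst : t ∈ Submodule.span ℂ G) (hgs : s ∈ Submodule.span ℂ G)
      (hg : ∀ g ∈ G, hermPolar H g t = hermPolar H' g t) :
      hermPolar H s t = hermPolar H' s t := by
    induction hgs using Submodule.span_induction with
    | mem g hgG => exact hg g hgG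
    | zero =>
      have e := hs.hermPolar_smul_left 0 ((hm 0).mp (zero_mem _)) ((hm t).mp hst)
      have e' := hs'.hermPolar_smul_left 0 ((hm' 0).mp (zero_mem _)) ((hm' t).mp hst)
      rw [zero_smul, zero_mul] at e e'
      rw [e, e']
    | add x y hx hy ihx ihy =>
      rw [hs.hermPolar_add_left ((hm _).mp hx) ((hm _).mp hy) ((hm _).mp hst),
        hs'.hermPolar_add_left ((hm' _).mp hx) ((hm' _).mp hy) ((hm' _).mp hst), ihx, ihy]
    | smul a x hx ih =>
      rw [hs.hermPolar_smul_left a ((hm _).mp hx) ((hm _).mp hst),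
        hs'.hermPolar_smul_left a ((hm' _).mp hx) ((hm' _).mp hst), ih]
  have hall (t) (ht : t ∈ Submodule.span ℂ G) : hermPolar H t t = hermPolar H' t t := by
    refine hleft t t ht ht fun g hg => ?_
    have hg' := Submodule.subset_span (R := ℂ) hg
    rw [← hs.conj_hermPolar ((hm _).mp ht) ((hm _).mp hg'),
      ← hs'.conj_hermPolar ((hm' _).mp ht) ((hm' _).mp hg')]
    congr 1
    refine hleft t g hg' ht fun k hk => ?_
    obtain ⟨x, x', hx, hx', rfl⟩ := hg
    obtain ⟨y, y', hy, hy', rfl⟩ := hk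
    rw [hpol y x y' x' hy hx hy' hx', hpol' y x y' x' hy hx hy' hx']
  funext t
  by_cases ht : t ∈ Submodule.span ℂ G
  · have e := hall t ht
    rw [hs.hermPolar_self ((hm t).mp ht), hs'.hermPolar_self ((hm' t).mp ht),
      Complex.ofReal_inj] at e
    exact (ENNReal.toReal_eq_toReal_iff' ((hm t).mp ht) ((hm' t).mp ht)).mp e
  · rw [not_not.mp (mt (hm t).mpr ht), not_not.mp (mt (hm' t).mpr ht)]

theorem dualBasis_tensorProduct_repr [FiniteDimensional ℂ V] [FiniteDimensional ℂ V']
    {ι κ : Type*} [Fintype ι] [Fintype κ] [DecidableEq ι] [DecidableEq κ]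
    (b : Module.Basis ι ℂ V) (b' : Module.Basis κ ℂ V')
    (ℓ : Module.Dual ℂ V ⊗[ℂ] Module.Dual ℂ V') (p : ι × κ) :
    (b.dualBasis.tensorProduct b'.dualBasis).repr ℓ p
      = TensorProduct.dualDistribEquiv ℂ V V' ℓ (b.tensorProduct b' p) := by
  induction ℓ using TensorProduct.induction_on with
  | zero => simp
  | add x y hx hy => simp [hx, hy]
  | tmul f g =>
    rw [Module.Basis.tensorProduct_apply', Module.Basis.tensorProduct_repr_tmul_apply]
    have : TensorProduct.dualDistribEquiv ℂ V V' (f ⊗ₜ[ℂ] g) (b p.1 ⊗ₜ[ℂ] b' p.2)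
        = f (b p.1) * g (b' p.2) := TensorProduct.dualDistrib_apply f g _ _
    rw [this, smul_eq_mul, mul_comm]
    simp

end Tensor

/-! ### Existence of a diagonalizing basis -/

section Diagonalization

variable {V : Type*} [AddCommGroup V] [Module ℂ V]

/-- `h` has the form `∑ c i * |x i|²` in some finite basis. -/
def IsDiagonalizable (h : V → ℝ≥0∞) : Prop :=
  ∃ (ι : Type) (_ : Fintype ι) (b : Module.Basis ι ℂ V) (c : ι → ℝ≥0∞), h = diagForm b c

theorem isDiagonalizable_of_const [FiniteDimensional ℂ V] {h : V → ℝ≥0∞} (c : ℝ≥0∞) (h0 : h 0 = 0)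
    (hc : ∀ x, x ≠ 0 → h x = c) (hcc : c = 0 ∨ c = ⊤) : IsDiagonalizable h := by
  refine ⟨_, inferInstance, Module.finBasis ℂ V, fun _ => c, ?_⟩
  funext x
  by_cases hx : x = 0
  · simp [hx, h0, diagForm]
  rw [hc x hx]
  rcases hcc with rfl | rfl
  · simp [diagForm]
  · by_contra hne
    apply hx
    refine (Module.finBasis ℂ V).ext_elem fun i => ?_
    rw [repr_eq_zero_of_diagForm_ne_top (Ne.symm hne) rfl]
    simp

theorem isDiagonalizable_of_isCompl {h : V → ℝ≥0∞} {A C : Submodule ℂ V} (hAC : IsCompl A C)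
    (hA : IsDiagonalizable (fun a : A => h a)) (hC : IsDiagonalizable (fun x : C => h x))
    (hadd : ∀ a ∈ A, ∀ x ∈ C, h (a + x) = h a + h x) : IsDiagonalizable h := by
  obtain ⟨ι, _, b, c, hb⟩ := hA
  obtain ⟨κ, _, b', c', hb'⟩ := hC
  refine ⟨ι ⊕ κ, inferInstance, (b.prod b').map (Submodule.prodEquivOfIsCompl A C hAC),
    Sum.elim c c', ?_⟩
  funext x
  obtain ⟨⟨a, y⟩, rfl⟩ := (Submodule.prodEquivOfIsCompl A C hAC).surjective x
  have ha := congrFun hb a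
  have hy := congrFun hb' y
  simp only [diagForm] at ha hy
  rw [Submodule.coe_prodEquivOfIsCompl', hadd a a.2 y y.2, ha, hy]
  simp [diagForm, Fintype.sum_sum_type, -Submodule.coe_prodEquivOfIsCompl']

theorem isDiagonalizable_of_posDef [FiniteDimensional ℂ V] {h : V → ℝ≥0∞}
    (hh : IsSingularHermitianForm h) (hf : IsFiniteForm h) (hn : IsNondegenerateForm h) :
    IsDiagonalizable h := by
  let core : InnerProductSpace.Core ℂ V :=
    { inner := fun x y => hermPolar h y x
      conj_inner_symm := fun x y => hh.conj_hermPolar_of_finite hf x y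
      re_inner_nonneg := fun x => by simp [hh.hermPolar_self_of_finite hf x]
      add_left := fun x y z => by
        rw [← hh.conj_hermPolar_of_finite hf, hh.hermPolar_add_left_of_finite hf, map_add,
          hh.conj_hermPolar_of_finite hf, hh.conj_hermPolar_of_finite hf]
      smul_left := fun x y r => by
        rw [← hh.conj_hermPolar_of_finite hf, hh.hermPolar_smul_left_of_finite hf, map_mul,
          hh.conj_hermPolar_of_finite hf]
      definite := fun x hx => by
        rw [hh.hermPolar_self_of_finite hf, Complex.ofReal_eq_zero,
          ENNReal.toReal_eq_zero_iff] at hx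
        exact hn x (hx.resolve_right (hf x)) }
  let _ : NormedAddCommGroup V := core.toNormedAddCommGroup
  let _ : InnerProductSpace ℂ V := InnerProductSpace.ofCore core.toCore
  let b := stdOrthonormalBasis ℂ V
  refine ⟨_, inferInstance, b.toBasis, fun _ => 1, ?_⟩
  funext x
  have hself : inner ℂ x x = ((h x).toReal : ℂ) := hh.hermPolar_self_of_finite hf x
  have hnorm : ‖x‖ ^ 2 = (h x).toReal := by
    have := inner_self_eq_norm_sq_to_K (𝕜 := ℂ) x
    rw [hself] at this
    exact Complex.ofReal_injective (by rw [Complex.ofReal_pow]; exact this.symm)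
  have hfin : diagForm b.toBasis (fun _ => 1) x ≠ ⊤ :=
    ENNReal.sum_ne_top.mpr fun i _ => by finiteness
  rw [← ENNReal.toReal_eq_toReal_iff' (hf x) hfin, toReal_diagForm hfin, ← hnorm,
    ← b.sum_sq_norm_inner_right]
  simp [b.repr_apply_apply]

theorem IsSingularHermitianForm.isDiagonalizable_of_finite [FiniteDimensional ℂ V]
    {h : V → ℝ≥0∞} (hh : IsSingularHermitianForm h) (hf : IsFiniteForm h) :
    IsDiagonalizable h := by
  obtain ⟨C, hC⟩ := hh.kernel.exists_isCompl
  refine isDiagonalizable_of_isCompl hC ?_ ?_ ?_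
  · exact isDiagonalizable_of_const 0 (by simp [hh.map_zero]) (fun x _ => x.2) (Or.inl rfl)
  · refine isDiagonalizable_of_posDef (hh.comp_linearMap C.subtype) (fun x => hf x) ?_
    intro x hx
    have hmem : (x : V) ∈ hh.kernel := hx
    exact Subtype.ext (Submodule.disjoint_def.mp hC.disjoint x hmem x.2)
  · intro a ha x _
    have ha : h a = 0 := ha
    rw [ha, zero_add, ← ENNReal.toReal_eq_toReal_iff' (hf _) (hf _)]
    exact (hh.isParallelogramForm hf).add_of_eq_zero (by simp [ha]) x

theorem IsSingularHermitianForm.isDiagonalizable [FiniteDimensional ℂ V]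
    {h : V → ℝ≥0∞} (hh : IsSingularHermitianForm h) : IsDiagonalizable h := by
  obtain ⟨E, hE⟩ := hh.finLocus.exists_isCompl
  have htop (x : V) (hx : x ∈ E) (hx0 : x ≠ 0) : h x = ⊤ := by
    by_contra hne
    exact hx0 (Submodule.disjoint_def.mp hE.disjoint x hne hx)
  refine isDiagonalizable_of_isCompl hE ?_ ?_ ?_
  · exact (hh.comp_linearMap hh.finLocus.subtype).isDiagonalizable_of_finite hh.finite_restrict
  · exact isDiagonalizable_of_const ⊤ (by simp [hh.map_zero])
      (fun x hx => htop x x.2 (by simpa using hx)) (Or.inr rfl)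
  · intro a ha x hx
    by_cases hx0 : x = 0
    · simp [hx0, hh.map_zero]
    rw [htop x hx hx0, add_top]
    by_contra hne
    have hmem : x ∈ hh.finLocus := by
      have := hh.finLocus.sub_mem (show a + x ∈ hh.finLocus from hne) ha
      simpa using this
    exact hx0 (Submodule.disjoint_def.mp hE.disjoint x hmem hx)

end Diagonalization

/-- **Duals of tensor products of singular Hermitian forms.**
Let `V, V'` be finite-dimensional complex vector spaces and `h, h'` singular
Hermitian forms on them whose tensor product is defined (both non-degenerate,
or both finite, or one of them both non-degenerate and finite).  Then under the
canonical identification `(V ⊗ V')^∨ ≅ V^∨ ⊗ V'^∨` one has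
`(h ⊗ h')^∨ = h^∨ ⊗ h'^∨`. -/
theorem hermDual_tensor
    {V V' : Type*} [AddCommGroup V] [Module ℂ V] [FiniteDimensional ℂ V]
    [AddCommGroup V'] [Module ℂ V'] [FiniteDimensional ℂ V']
    (h : V → ℝ≥0∞) (h' : V' → ℝ≥0∞)
    (hh : IsSingularHermitianForm h) (hh' : IsSingularHermitianForm h')
    (hdef : (IsNondegenerateForm h ∧ IsNondegenerateForm h') ∨
            (IsFiniteForm h ∧ IsFiniteForm h') ∨
            (IsNondegenerateForm h ∧ IsFiniteForm h) ∨
            (IsNondegenerateForm h' ∧ IsFiniteForm h'))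
    (H : V ⊗[ℂ] V' → ℝ≥0∞) (hH : IsTensorOf h h' H) :
    IsTensorOf (hermDual h) (hermDual h')
      (fun ℓ : Module.Dual ℂ V ⊗[ℂ] Module.Dual ℂ V' =>
        hermDual H (TensorProduct.dualDistribEquiv ℂ V V' ℓ)) := by
  classical
  obtain ⟨ι, _, b, c, rfl⟩ := hh.isDiagonalizable
  obtain ⟨κ, _, b', c', rfl⟩ := hh'.isDiagonalizable
  have nd {i} (hn : IsNondegenerateForm (diagForm b c)) : c i ≠ 0 := fun h0 =>
    b.ne_zero i (hn _ (by rw [diagForm_basis, h0]))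
  have nd' {j} (hn : IsNondegenerateForm (diagForm b' c')) : c' j ≠ 0 := fun h0 =>
    b'.ne_zero j (hn _ (by rw [diagForm_basis, h0]))
  have fin {i} (hf : IsFiniteForm (diagForm b c)) : c i ≠ ⊤ := fun ht =>
    hf (b i) (by rw [diagForm_basis, ht])
  have fin' {j} (hf : IsFiniteForm (diagForm b' c')) : c' j ≠ ⊤ := fun ht =>
    hf (b' j) (by rw [diagForm_basis, ht])
  have h1 (i j) (h0 : c i = 0) : c' j ≠ ⊤ := by
    rcases hdef with ⟨hn, -⟩ | ⟨-, hf⟩ | ⟨hn, -⟩ | ⟨-, hf⟩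
    exacts [absurd h0 (nd hn), fin' hf, absurd h0 (nd hn), fin' hf]
  have h2 (i j) (ht : c i = ⊤) : c' j ≠ 0 := by
    rcases hdef with ⟨-, hn⟩ | ⟨hf, -⟩ | ⟨-, hf⟩ | ⟨hn, -⟩
    exacts [nd' hn, absurd ht (fin hf), absurd ht (fin hf), nd' hn]
  obtain rfl := hH.unique (isTensorOf_diagForm b b' c c' h1 h2)
  rw [hermDual_diagForm_eq, hermDual_diagForm_eq]
  convert isTensorOf_diagForm b.dualBasis b'.dualBasis (fun i => (c i)⁻¹) (fun j => (c' j)⁻¹)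
    (fun i j h0 => ?_) (fun i j ht => ?_) using 1
  · funext ℓ
    rw [hermDual_diagForm, diagForm]
    refine Finset.sum_congr rfl fun p _ => ?_
    rw [dualBasis_tensorProduct_repr,
      ENNReal.mul_inv (or_iff_not_imp_left.mpr fun h0 => h1 _ _ (not_not.mp h0))
        (or_iff_not_imp_left.mpr fun ht => h2 _ _ (not_not.mp ht))]
  · simpa using h2 i j (ENNReal.inv_eq_zero.mp h0)
  · simpa using h1 i j (ENNReal.inv_eq_top.mp ht)
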